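/- arXiv:1605.02469 — 3 statements merged into one kernel-verified Lean document; each statement's English description precedes it below -/
import Mathlib

section
/- Let G be a digraph on v vertices containing a transitive subtournament of size s, and let θ_1 ≥ θ_2 ≥ … ≥ θ_v be the eigenvalues of the Seidel matrix S_G listed in decreasing order. Then for every i with 1 ≤ i ≤ ⌊s/2⌋, one has 2·s·arccot(θ_i) ≤ (2i−1)·π, i.e., s ≤ (2i−1)π/(2 arccot(θ_i)). -/
open Matrix Finset

/-- A digraph on `v` vertices, given by its adjacency matrix: entries in `{0,1}`, zero diagonal. -/
def IsDigraph {v : ℕ} (A : Matrix (Fin v) (Fin v) ℂ) : Prop :=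
  (∀ x y, A x y = 0 ∨ A x y = 1) ∧ ∀ x, A x x = 0

/-- The Seidel matrix `S = i (A - Aᵀ)` of a digraph with adjacency matrix `A`. -/
def Seidel {v : ℕ} (A : Matrix (Fin v) (Fin v) ℂ) : Matrix (Fin v) (Fin v) ℂ :=
  Complex.I • (A - Aᵀ)

/-- `T` is a transitive subtournament of the digraph with adjacency matrix `A`. -/
def IsTransSubtournament {v : ℕ} (A : Matrix (Fin v) (Fin v) ℂ) (T : Finset (Fin v)) : Prop :=
  (∀ x ∈ T, ∀ y ∈ T, x ≠ y → Xor' (A x y = 1) (A y x = 1)) ∧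
  (∀ x ∈ T, ∀ y ∈ T, ∀ z ∈ T, A x y = 1 → A y z = 1 → A x z = 1)

/-- The inverse cotangent, with values in `(0, π)`. -/
noncomputable def arccot (x : ℝ) : ℝ := Real.pi / 2 - Real.arctan x

/-!
Cauchy interlacing bounds the number of eigenvalues `≥ t` of `S_G` from below by the number of
eigenvalues `≥ t` of any principal submatrix, here the Seidel matrix of the transitive tournament on
`s` vertices. If `w ^ s = -1`, summing geometric series shows that `(1, w, …, w ^ (s - 1))` is an
eigenvector of the latter for `i (1 + w) / (1 - w)`. For `w = exp (-2 i a)` this is `cot a`, and the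
equation `w ^ s = -1` holds for the angles `a = (2m + 1)π / (2s)`, `0 ≤ m < s`. As `cot` decreases
on `(0, π)`, at least `m + 1` eigenvalues of `S_G` are `≥ cot ((2m + 1)π / (2s))`.
-/

open scoped InnerProductSpace

section EigenbasisForm

variable {𝕜 E ι : Type*} [RCLike 𝕜] [NormedAddCommGroup E] [InnerProductSpace 𝕜 E] [Fintype ι]
  (b : OrthonormalBasis ι 𝕜 E) {S : E →ₗ[𝕜] E} {d : ι → ℝ}

lemma re_inner_map_self_eq_sum (hS : ∀ j, S (b j) = (d j : 𝕜) • b j) (x : E) :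
    RCLike.re ⟪x, S x⟫_𝕜 = ∑ j, d j * ‖⟪b j, x⟫_𝕜‖ ^ 2 := by
  have hSx : S x = ∑ j, (⟪b j, x⟫_𝕜 * d j) • b j := by
    conv_lhs => rw [← b.sum_repr' x]
    simp only [map_sum, map_smul, hS, smul_smul]
  rw [hSx, inner_sum, map_sum]
  refine sum_congr rfl fun j _ => ?_
  rw [inner_smul_right, mul_right_comm, RCLike.re_mul_ofReal, inner_mul_symm_re_eq_norm, norm_mul,
    norm_inner_symm x, ← sq, mul_comm]

lemma mul_norm_sq_le_re_inner_map_self (hS : ∀ j, S (b j) = (d j : 𝕜) • b j) {t : ℝ} {x : E}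
    (hx : ∀ j, d j < t → ⟪b j, x⟫_𝕜 = 0) : t * ‖x‖ ^ 2 ≤ RCLike.re ⟪x, S x⟫_𝕜 := by
  rw [re_inner_map_self_eq_sum b hS, ← b.sum_sq_norm_inner_right x, mul_sum]
  refine sum_le_sum fun j _ => ?_
  rcases lt_or_ge (d j) t with hj | hj
  · simp [hx j hj]
  · gcongr

lemma re_inner_map_self_lt_mul_norm_sq (hS : ∀ j, S (b j) = (d j : 𝕜) • b j) {t : ℝ} {x : E}
    (hx : ∀ j, t ≤ d j → ⟪b j, x⟫_𝕜 = 0) (hx0 : x ≠ 0) :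
    RCLike.re ⟪x, S x⟫_𝕜 < t * ‖x‖ ^ 2 := by
  obtain ⟨i, hi⟩ : ∃ i, ⟪b i, x⟫_𝕜 ≠ 0 := by
    by_contra! h
    exact hx0 (by simpa [h] using (b.sum_repr' x).symm)
  rw [re_inner_map_self_eq_sum b hS, ← b.sum_sq_norm_inner_right x, mul_sum]
  refine sum_lt_sum (fun j _ => ?_) ⟨i, mem_univ i, ?_⟩
  · rcases lt_or_ge (d j) t with hj | hj
    · gcongr
    · simp [hx j hj]
  · have hit : d i < t := lt_of_not_ge fun h => hi (hx i h)
    gcongr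

end EigenbasisForm

lemma exists_ne_zero_forall_dual_apply_eq_zero {K V ι : Type*} [Field K] [AddCommGroup V]
    [Module K V] [Fintype ι] (φ : ι → Module.Dual K V)
    (hcard : Fintype.card ι < Module.finrank K V) : ∃ x ≠ 0, ∀ i, φ i x = 0 := by
  have : FiniteDimensional K V := .of_finrank_pos (by omega)
  have hker : LinearMap.ker (LinearMap.pi φ) ≠ ⊥ :=
    LinearMap.ker_ne_bot_of_finrank_lt (by simpa using hcard)
  obtain ⟨x, hx, hx0⟩ := (Submodule.ne_bot_iff _).1 hker
  exact ⟨x, hx0, congrFun hx⟩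

theorem card_eigenvalues_ge_le_of_linearIsometry {𝕜 E F ι κ : Type*} [RCLike 𝕜]
    [NormedAddCommGroup E] [InnerProductSpace 𝕜 E] [NormedAddCommGroup F] [InnerProductSpace 𝕜 F]
    [Fintype ι] [Fintype κ] (b : OrthonormalBasis ι 𝕜 E) (u : OrthonormalBasis κ 𝕜 F)
    {S : E →ₗ[𝕜] E} {B : F →ₗ[𝕜] F} {d : ι → ℝ} {c : κ → ℝ}
    (hS : ∀ j, S (b j) = (d j : 𝕜) • b j) (hB : ∀ k, B (u k) = (c k : 𝕜) • u k)
    (P : F →ₗᵢ[𝕜] E) (hP : ∀ y, ⟪P y, S (P y)⟫_𝕜 = ⟪y, B y⟫_𝕜) (t : ℝ) :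
    #{k | t ≤ c k} ≤ #{j | t ≤ d j} := by
  by_contra! hlt
  -- By dimension count some `y ≠ 0` is orthogonal to the `u k` with `c k < t` while `P y` is
  -- orthogonal to the `b j` with `t ≤ d j`; its Rayleigh quotient is then both `≥ t` and `< t`.
  let φ : {k // c k < t} ⊕ {j // t ≤ d j} → Module.Dual 𝕜 F :=
    Sum.elim (fun k => innerₛₗ 𝕜 (u k)) (fun j => innerₛₗ 𝕜 (b j) ∘ₗ P.toLinearMap)
  have hcard : Fintype.card ({k // c k < t} ⊕ {j // t ≤ d j}) < Module.finrank 𝕜 F := by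
    have hsplit := card_filter_add_card_filter_not (s := (univ : Finset κ)) (fun k => t ≤ c k)
    simp only [not_le] at hsplit
    rw [Fintype.card_sum, Fintype.card_subtype, Fintype.card_subtype,
      Module.finrank_eq_card_basis u.toBasis, ← card_univ]
    omega
  obtain ⟨y, hy0, hy⟩ := exists_ne_zero_forall_dual_apply_eq_zero φ hcard
  have hlower : t * ‖y‖ ^ 2 ≤ RCLike.re ⟪y, B y⟫_𝕜 :=
    mul_norm_sq_le_re_inner_map_self u hB fun k hk => hy (.inl ⟨k, hk⟩)
  have hupper : RCLike.re ⟪P y, S (P y)⟫_𝕜 < t * ‖P y‖ ^ 2 :=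
    re_inner_map_self_lt_mul_norm_sq b hS (fun j hj => hy (.inr ⟨j, hj⟩))
      ((map_ne_zero_iff P P.injective).2 hy0)
  rw [hP, P.norm_map] at hupper
  exact hlower.not_gt hupper

section HermitianMatrix

variable {𝕜 m n : Type*} [RCLike 𝕜] [Fintype m] [DecidableEq m] [Fintype n] [DecidableEq n]

lemma toEuclideanLin_eigenvectorBasis {S : Matrix n n 𝕜} (hS : S.IsHermitian) (j : n) :
    toEuclideanLin S (hS.eigenvectorBasis j) =
      (hS.eigenvalues j : 𝕜) • hS.eigenvectorBasis j := by
  ext x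
  rw [← RCLike.real_smul_eq_coe_smul]
  exact congrFun (hS.mulVec_eigenvectorBasis j) x

lemma inner_toEuclideanLin_left (P : Matrix n m 𝕜) (x : EuclideanSpace 𝕜 m)
    (y : EuclideanSpace 𝕜 n) :
    ⟪toEuclideanLin P x, y⟫_𝕜 = ⟪x, toEuclideanLin Pᴴ y⟫_𝕜 := by
  rw [toEuclideanLin_conjTranspose_eq_adjoint, LinearMap.adjoint_inner_right]

theorem card_eigenvalues_ge_compression_le {S : Matrix n n 𝕜} (hS : S.IsHermitian)
    {P : Matrix n m 𝕜} (hP : Pᴴ * P = 1) (hB : (Pᴴ * S * P).IsHermitian) (t : ℝ) :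
    #{k | t ≤ hB.eigenvalues k} ≤ #{j | t ≤ hS.eigenvalues j} := by
  have hisometry (x y : EuclideanSpace 𝕜 m) :
      ⟪toEuclideanLin P x, toEuclideanLin P y⟫_𝕜 = ⟪x, y⟫_𝕜 := by
    rw [inner_toEuclideanLin_left, ← LinearMap.comp_apply, ← toLpLin_mul_same, hP, toLpLin_one,
      LinearMap.id_apply]
  refine card_eigenvalues_ge_le_of_linearIsometry hS.eigenvectorBasis hB.eigenvectorBasis
    (toEuclideanLin_eigenvectorBasis hS) (toEuclideanLin_eigenvectorBasis hB)
    ((toEuclideanLin P).isometryOfInner hisometry) (fun y => ?_) t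
  simp only [LinearMap.coe_isometryOfInner, inner_toEuclideanLin_left, toLpLin_mul_same,
    LinearMap.comp_apply]

theorem card_eigenvalues_ge_submatrix_le {S : Matrix n n 𝕜} (hS : S.IsHermitian) {f : m → n}
    (hf : Function.Injective f) (hB : (S.submatrix f f).IsHermitian) (t : ℝ) :
    #{k | t ≤ hB.eigenvalues k} ≤ #{j | t ≤ hS.eigenvalues j} := by
  let P : Matrix n m 𝕜 := (1 : Matrix n n 𝕜).submatrix id f
  have hP : Pᴴ * P = 1 := by
    ext j k
    simp [P, Matrix.mul_apply, Matrix.one_apply, hf.eq_iff, eq_comm]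
  have hPS : S.submatrix f f = Pᴴ * S * P := by
    ext j k
    simp [P, Matrix.mul_apply, Matrix.one_apply]
  simp only [hPS] at hB ⊢
  exact card_eigenvalues_ge_compression_le hS hP hB t

lemma exists_eigenvalues_eq_of_mulVec_eq_smul {B : Matrix n n 𝕜} (hB : B.IsHermitian) {μ : ℝ}
    {x : n → 𝕜} (hx0 : x ≠ 0) (hx : B *ᵥ x = (μ : 𝕜) • x) : ∃ k, hB.eigenvalues k = μ := by
  have hμ : Module.End.HasEigenvalue (toLin' B) (μ : 𝕜) :=
    Module.End.hasEigenvalue_of_hasEigenvector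
      (Module.End.hasEigenvector_iff.2 ⟨Module.End.mem_eigenspace_iff.2 hx, hx0⟩)
  have hspec := hμ.mem_spectrum
  rw [spectrum_toLin', hB.spectrum_eq_image_range] at hspec
  simpa using hspec

lemma card_le_card_eigenvalues_ge {κ : Type*} [Fintype κ] {B : Matrix n n 𝕜} (hB : B.IsHermitian)
    {μ : κ → ℝ} (hμ : Function.Injective μ) (hμB : ∀ k, ∃ j, hB.eigenvalues j = μ k) {t : ℝ}
    (ht : ∀ k, t ≤ μ k) : Fintype.card κ ≤ #{j | t ≤ hB.eigenvalues j} := by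
  choose g hg using hμB
  have hginj : Function.Injective g := fun k l hkl => hμ (by rw [← hg, ← hg, hkl])
  exact card_le_card_of_injOn g (fun k _ => by simpa [hg] using ht k) hginj.injOn

end HermitianMatrix

lemma le_apply_of_card_Iio_lt_card_ge {ι β : Type*} [LinearOrder ι] [LocallyFiniteOrderBot ι]
    [Fintype ι] [LinearOrder β] {θ : ι → β} (hθ : Antitone θ) {i : ι} {t : β}
    (hi : #(Iio i) < #{j | t ≤ θ j}) : t ≤ θ i := by
  by_contra! hlt
  refine hi.not_ge (card_le_card fun j hj => mem_Iio.2 (lt_of_not_ge fun hij => ?_))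
  exact ((mem_filter.1 hj).2.trans (hθ hij)).not_gt hlt

lemma tan_pi_div_two_sub_eq_cot (a : ℝ) : Real.tan (Real.pi / 2 - a) = Real.cot a := by
  rw [Real.tan_pi_div_two_sub, Real.tan_inv_eq_cot]

lemma strictAntiOn_cot : StrictAntiOn Real.cot (Set.Ioo 0 Real.pi) := by
  rintro a ⟨ha0, -⟩ b ⟨-, hbπ⟩ hab
  rw [← tan_pi_div_two_sub_eq_cot, ← tan_pi_div_two_sub_eq_cot]
  exact Real.tan_lt_tan_of_lt_of_lt_pi_div_two (by linarith) (by linarith) (by linarith)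

lemma arccot_lt_pi (x : ℝ) : arccot x < Real.pi := by
  unfold arccot
  linarith [Real.neg_pi_div_two_lt_arctan x]

lemma arccot_le_of_cot_le {a x : ℝ} (ha0 : 0 < a) (haπ : a < Real.pi) (hax : Real.cot a ≤ x) :
    arccot x ≤ a := by
  have harctan : Real.pi / 2 - a ≤ Real.arctan x := by
    rw [← Real.arctan_tan (x := Real.pi / 2 - a) (by linarith) (by linarith),
      tan_pi_div_two_sub_eq_cot]
    exact Real.arctan_mono hax
  unfold arccot
  linarith

/-- Adjacency matrix of the transitive tournament `0 → 1 → ⋯ → s - 1`, with an arc from each vertex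
to every larger one: the normal form of a transitive subtournament. -/
def transitiveTournament (s : ℕ) : Matrix (Fin s) (Fin s) ℂ :=
  Matrix.of fun j k => if j < k then 1 else 0

lemma sum_Ioi_sub_sum_Iio_pow_mul {R : Type*} [CommRing R] (w : R) {s : ℕ} (j : Fin s) :
    (∑ k ∈ Ioi j, w ^ (k : ℕ) - ∑ k ∈ Iio j, w ^ (k : ℕ)) * (1 - w) =
      w ^ (j : ℕ) * (1 + w) - (1 + w ^ s) := by
  have hIoi : ∑ k ∈ Ioi j, w ^ (k : ℕ) = ∑ k ∈ Ico (j + 1 : ℕ) s, w ^ k := by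
    rw [Ico_add_one_left_eq_Ioo, ← Fin.map_valEmbedding_Ioi, sum_map]
    rfl
  have hIio : ∑ k ∈ Iio j, w ^ (k : ℕ) = ∑ k ∈ range j, w ^ k := by
    rw [← Nat.Iio_eq_range, ← Fin.map_valEmbedding_Iio, sum_map]
    rfl
  rw [hIoi, hIio, sub_mul, geom_sum_Ico_mul_neg w (Nat.add_one_le_of_lt j.isLt),
    geom_sum_mul_neg]
  ring

lemma seidel_transitiveTournament_mulVec_apply {s : ℕ} (x : Fin s → ℂ) (j : Fin s) :
    (Seidel (transitiveTournament s) *ᵥ x) j =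
      Complex.I * (∑ k ∈ Ioi j, x k - ∑ k ∈ Iio j, x k) := by
  rw [Seidel, smul_mulVec, sub_mulVec]
  simp [transitiveTournament, mulVec, dotProduct, ← sum_filter, filter_lt_eq_Ioi,
    filter_gt_eq_Iio]

lemma seidel_transitiveTournament_mulVec_pow {s : ℕ} {w : ℂ} (hw : w ^ s = -1) :
    Seidel (transitiveTournament s) *ᵥ (fun j => w ^ (j : ℕ)) =
      (Complex.I * (1 + w) / (1 - w)) • fun j : Fin s => w ^ (j : ℕ) := by
  have hw1 : 1 - w ≠ 0 := by
    intro h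
    rw [← sub_eq_zero.1 h, one_pow] at hw
    norm_num at hw
  ext j
  have hsum := sum_Ioi_sub_sum_Iio_pow_mul w j
  rw [seidel_transitiveTournament_mulVec_apply, Pi.smul_apply, smul_eq_mul]
  field_simp
  linear_combination hsum - hw

/-- The angles `(2m + 1)π / (2s)`, whose cotangents are the Seidel eigenvalues of the transitive
tournament on `s` vertices for `m < s`. The junk value at `s = 0` is `0`. -/
noncomputable def tournamentAngle (s m : ℕ) : ℝ := (2 * m + 1) * Real.pi / (2 * s)

lemma tournamentAngle_mem_Ioo {s m : ℕ} (hm : m < s) :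
    tournamentAngle s m ∈ Set.Ioo 0 Real.pi := by
  have hs : (0 : ℝ) < s := by exact_mod_cast m.zero_le.trans_lt hm
  have hms : (m : ℝ) + 1 ≤ s := by exact_mod_cast hm
  refine ⟨by unfold tournamentAngle; positivity, ?_⟩
  rw [tournamentAngle, div_lt_iff₀ (by positivity)]
  nlinarith [Real.pi_pos]

lemma tournamentAngle_strictMono {s : ℕ} (hs : 0 < s) : StrictMono (tournamentAngle s) := by
  intro m l hml
  unfold tournamentAngle
  gcongr

lemma exp_neg_tournamentAngle_pow {s : ℕ} (hs : s ≠ 0) (m : ℕ) :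
    Complex.exp (2 * Complex.I * -(tournamentAngle s m : ℂ)) ^ s = -1 := by
  have hexponent : (s : ℂ) * (2 * Complex.I * -(tournamentAngle s m : ℂ)) =
      Real.pi * Complex.I - (m + 1 : ℕ) * (2 * Real.pi * Complex.I) := by
    unfold tournamentAngle
    push_cast
    field_simp
    ring
  rw [← Complex.exp_nat_mul, hexponent, Complex.exp_sub, Complex.exp_pi_mul_I,
    Complex.exp_nat_mul_two_pi_mul_I, div_one]

lemma cot_eq_I_mul_exp_ratio (z : ℂ) :
    Complex.cot z = Complex.I * (1 + Complex.exp (2 * Complex.I * -z)) /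
      (1 - Complex.exp (2 * Complex.I * -z)) := by
  have hcot_neg : Complex.cot z = -Complex.cot (-z) := by
    simp [Complex.cot_eq_cos_div_sin, div_neg]
  rw [hcot_neg, Complex.cot_eq_exp_ratio, ← div_div, Complex.div_I]
  ring

lemma exists_eigenvalues_eq_cot {s m : ℕ} (hm : m < s)
    (hB : (Seidel (transitiveTournament s)).IsHermitian) :
    ∃ k, hB.eigenvalues k = Real.cot (tournamentAngle s m) := by
  have hs : s ≠ 0 := by omega
  refine exists_eigenvalues_eq_of_mulVec_eq_smul hB (x := fun j =>
    Complex.exp (2 * Complex.I * -(tournamentAngle s m : ℂ)) ^ (j : ℕ)) ?_ ?_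
  · exact fun h => pow_ne_zero m (Complex.exp_ne_zero _) (congrFun h ⟨m, hm⟩)
  · rw [seidel_transitiveTournament_mulVec_pow (exp_neg_tournamentAngle_pow hs m),
      ← cot_eq_I_mul_exp_ratio, ← Complex.ofReal_cot]
    rfl

lemma lt_card_eigenvalues_ge_cot {s i : ℕ} (hi : i < s)
    (hB : (Seidel (transitiveTournament s)).IsHermitian) :
    i < #{k | Real.cot (tournamentAngle s i) ≤ hB.eigenvalues k} := by
  have hmem (m : Fin (i + 1)) : tournamentAngle s m ∈ Set.Ioo 0 Real.pi :=
    tournamentAngle_mem_Ioo (by omega)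
  have hmono := tournamentAngle_strictMono (s := s) (by omega)
  have hcard := card_le_card_eigenvalues_ge hB
    (μ := fun m : Fin (i + 1) => Real.cot (tournamentAngle s m))
    (t := Real.cot (tournamentAngle s i))
    (fun m l h => Fin.ext (hmono.injective (strictAntiOn_cot.injOn (hmem m) (hmem l) h)))
    (fun m => exists_eigenvalues_eq_cot (by omega) hB)
    (fun m => strictAntiOn_cot.antitoneOn (hmem m) (hmem (Fin.last i))
      (hmono.monotone (by simpa using m.is_le)))
  simpa using hcard

lemma nonempty_relIso_fin_of_isStrictTotalOrder {α : Type*} [Fintype α] (r : α → α → Prop)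
    [IsStrictTotalOrder α r] :
    Nonempty ((· < · : Fin (Fintype.card α) → _ → Prop) ≃r r) := by
  classical
  let _ : LinearOrder α := linearOrderOfSTO r
  exact ⟨(Fintype.orderIsoFinOfCardEq α rfl).toRelIsoLT⟩

lemma exists_submatrix_eq_transitiveTournament {v : ℕ} {A : Matrix (Fin v) (Fin v) ℂ}
    (hA : IsDigraph A) {T : Finset (Fin v)} (hT : IsTransSubtournament A T) :
    ∃ f : Fin #T → Fin v, Function.Injective f ∧ A.submatrix f f = transitiveTournament #T := by
  let arc : T → T → Prop := fun x y => A x y = 1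
  have : IsStrictTotalOrder T arc :=
    { irrefl := fun x => by simp [arc, hA.2]
      trans := fun x y z => hT.2 x x.2 y y.2 z z.2
      trichotomous := fun x y hxy hyx => by
        by_contra hne
        rcases hT.1 x x.2 y y.2 (Subtype.coe_ne_coe.2 hne) with h | h
        · exact hxy h.1
        · exact hyx h.1 }
  obtain ⟨e⟩ := nonempty_relIso_fin_of_isStrictTotalOrder arc
  rw [Fintype.card_coe] at e
  refine ⟨fun j => e j, Subtype.val_injective.comp e.injective, ?_⟩
  ext j k
  have harc : A (e j) (e k) = 1 ↔ j < k := e.map_rel_iff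
  by_cases hjk : j < k
  · simpa [transitiveTournament, hjk] using harc.2 hjk
  · simpa [transitiveTournament, hjk] using (hA.1 _ _).resolve_right (mt harc.1 hjk)

lemma lt_card_eigenvalues_seidel_ge_cot {v : ℕ} {A : Matrix (Fin v) (Fin v) ℂ} (hA : IsDigraph A)
    (hH : (Seidel A).IsHermitian) {T : Finset (Fin v)} (hT : IsTransSubtournament A T) {i : ℕ}
    (hi : i < #T) : i < #{j | Real.cot (tournamentAngle #T i) ≤ hH.eigenvalues j} := by
  obtain ⟨f, hf, hfA⟩ := exists_submatrix_eq_transitiveTournament hA hT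
  have hsub : (Seidel A).submatrix f f = Seidel (transitiveTournament #T) := by
    rw [← hfA]
    rfl
  have hB : (Seidel (transitiveTournament #T)).IsHermitian := hsub ▸ hH.submatrix f
  calc i < #{k | Real.cot (tournamentAngle #T i) ≤ hB.eigenvalues k} :=
        lt_card_eigenvalues_ge_cot hi hB
    _ = #{k | Real.cot (tournamentAngle #T i) ≤ (hH.submatrix f).eigenvalues k} := by
        simp only [hsub]
    _ ≤ #{j | Real.cot (tournamentAngle #T i) ≤ hH.eigenvalues j} :=
        card_eigenvalues_ge_submatrix_le hH hf (hH.submatrix f) _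

theorem interlacing_bound_transitive_subtournament_general
    {v : ℕ} {A : Matrix (Fin v) (Fin v) ℂ} (hA : IsDigraph A) (hH : (Seidel A).IsHermitian)
    {T : Finset (Fin v)} (hT : IsTransSubtournament A T) {θ : Fin v → ℝ} (hθ : Antitone θ)
    (hperm : ∃ σ : Equiv.Perm (Fin v), ∀ i, θ i = hH.eigenvalues (σ i)) (i : Fin v) :
    2 * (#T : ℝ) * arccot (θ i) ≤ (2 * ((i : ℕ) : ℝ) + 1) * Real.pi := by
  rcases le_or_gt #T i with hi | hi
  · have hTi : 2 * (#T : ℝ) ≤ 2 * (i : ℕ) + 1 := by exact_mod_cast (by omega)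
    have harccot := (arccot_lt_pi (θ i)).le
    calc 2 * (#T : ℝ) * arccot (θ i) ≤ 2 * #T * Real.pi := by gcongr
      _ ≤ (2 * (i : ℕ) + 1) * Real.pi := by gcongr
  · obtain ⟨σ, hσ⟩ := hperm
    have hcount : i < #{j | Real.cot (tournamentAngle #T i) ≤ θ j} :=
      (lt_card_eigenvalues_seidel_ge_cot hA hH hT hi).trans_eq
        (card_equiv σ.symm (by simp [hσ]))
    have hcot : Real.cot (tournamentAngle #T i) ≤ θ i :=
      le_apply_of_card_Iio_lt_card_ge hθ (by rwa [Fin.card_Iio])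
    have hmem := tournamentAngle_mem_Ioo hi
    have harccot := arccot_le_of_cot_le hmem.1 hmem.2 hcot
    have hT0 : (#T : ℝ) ≠ 0 := by exact_mod_cast (i.val.zero_le.trans_lt hi).ne'
    calc 2 * (#T : ℝ) * arccot (θ i) ≤ 2 * #T * tournamentAngle #T i := by gcongr
      _ = (2 * (i : ℕ) + 1) * Real.pi := mul_div_cancel₀ _ (by positivity)

/-- If a digraph on `v` vertices contains a transitive subtournament of size `s`, and
`θ 0 ≥ θ 1 ≥ ⋯ ≥ θ (v-1)` are the eigenvalues of its Seidel matrix in decreasing order,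
then `2 s arccot(θ_i) ≤ (2i-1) π` for `1 ≤ i ≤ ⌊s/2⌋` (here the eigenvalue `θ_i` of the
statement is `θ (i-1)`). -/
theorem interlacing_bound_transitive_subtournament
    {v s : ℕ} (A : Matrix (Fin v) (Fin v) ℂ) (hA : IsDigraph A)
    (hH : (Seidel A).IsHermitian)
    (T : Finset (Fin v)) (hT : IsTransSubtournament A T) (hTcard : T.card = s)
    (θ : Fin v → ℝ)
    (hdec : ∀ i j : Fin v, i ≤ j → θ j ≤ θ i)
    (hperm : ∃ σ : Equiv.Perm (Fin v), ∀ i, θ i = hH.eigenvalues (σ i)) :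
    ∀ i : Fin v, (i : ℕ) + 1 ≤ s / 2 →
      2 * (s : ℝ) * arccot (θ i) ≤ (2 * ((i : ℕ) : ℝ) + 1) * Real.pi := by
  subst hTcard
  exact fun i _ => interlacing_bound_transitive_subtournament_general hA hH hT hdec hperm i
end

section
/- Let G be a digraph on v vertices containing a transitive subtournament of size s. Let α = max{θ : θ ∈ M(G)} be the largest main eigenvalue of the Seidel matrix S_G, suppose ev(G)∖M(G) is nonempty and let γ = max{θ : θ ∈ ev(G)∖M(G)}. If α ≤ γ, then s ≤ (3α² − 3γ² + √(4v²(1+3γ²) + 9(γ²−α²)²))/(2v). -/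
open Matrix Finset

/-- `P` is the orthogonal projection of `ℂ^v` onto the `θ`-eigenspace of `S`:
a Hermitian idempotent whose fixed space is exactly the `θ`-eigenspace. -/
def IsEigenProjection {v : ℕ} (S : Matrix (Fin v) (Fin v) ℂ) (θ : ℝ)
    (P : Matrix (Fin v) (Fin v) ℂ) : Prop :=
  P.IsHermitian ∧ P * P = P ∧ ∀ x : Fin v → ℂ, S *ᵥ x = (θ : ℂ) • x ↔ P *ᵥ x = x

/-!
Let `χ` be the indicator vector of a transitive subtournament `T` with `s` vertices. The
out-degrees inside `T` are `0, 1, …, s - 1`, so `S χ` has entries of modulus `|2j - (s - 1)|` on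
`T`, whence `‖S χ‖² ≥ s(s² - 1)/3`. On the other hand, expand `χ` in an orthonormal eigenbasis
of `S`. The spectrum and the set of main eigenvalues are symmetric about `0`, because `S` is both
Hermitian and skew-symmetric, so every eigenvalue satisfies `θ² ≤ γ²` and every main one
`θ² ≤ α²`. Only main eigenvectors contribute to `⟨𝟙, χ⟩ = s`, so by Cauchy–Schwarz the main part
of `χ` has squared norm at least `s²/v`, and `‖S χ‖² ≤ γ² s - (γ² - α²) s²/v`. Comparing the two
estimates gives a quadratic inequality for `s`.
-/

section OrthonormalBasis

variable {𝕜 V ι : Type*} [RCLike 𝕜] [NormedAddCommGroup V] [InnerProductSpace 𝕜 V] [Fintype ι]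
  (b : OrthonormalBasis ι 𝕜 V)

lemma sq_norm_inner_le_mul_sum_of_inner_eq_zero {M : Finset ι} {e : V}
    (he : ∀ i ∉ M, inner 𝕜 (b i) e = 0) (x : V) :
    ‖inner 𝕜 e x‖ ^ 2 ≤ ‖e‖ ^ 2 * ∑ i ∈ M, ‖inner 𝕜 (b i) x‖ ^ 2 := by
  have expansion : inner 𝕜 e x = ∑ i ∈ M, inner 𝕜 e (b i) * inner 𝕜 (b i) x := by
    rw [← b.sum_inner_mul_inner e x]
    refine (Finset.sum_subset M.subset_univ fun i _ hi => ?_).symm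
    rw [inner_eq_zero_symm.1 (he i hi), zero_mul]
  calc ‖inner 𝕜 e x‖ ^ 2
      ≤ (∑ i ∈ M, ‖inner 𝕜 e (b i)‖ * ‖inner 𝕜 (b i) x‖) ^ 2 := by
        rw [expansion]
        gcongr
        exact norm_sum_le_of_le _ fun i _ => norm_mul_le _ _
    _ ≤ (∑ i ∈ M, ‖inner 𝕜 e (b i)‖ ^ 2) * ∑ i ∈ M, ‖inner 𝕜 (b i) x‖ ^ 2 :=
        Finset.sum_mul_sq_le_sq_mul_sq _ _ _
    _ ≤ ‖e‖ ^ 2 * ∑ i ∈ M, ‖inner 𝕜 (b i) x‖ ^ 2 := by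
        rw [← b.sum_sq_norm_inner_left e]
        gcongr
        exact M.subset_univ

variable {f : V →ₗ[𝕜] V} {μ : ι → ℝ}

lemma sq_norm_apply_eq_sum_of_eigenbasis (hf : f.IsSymmetric)
    (hb : ∀ i, f (b i) = (μ i : 𝕜) • b i) (x : V) :
    ‖f x‖ ^ 2 = ∑ i, μ i ^ 2 * ‖inner 𝕜 (b i) x‖ ^ 2 := by
  rw [← b.sum_sq_norm_inner_right]
  refine Finset.sum_congr rfl fun i _ => ?_
  rw [← hf, hb, inner_smul_left, RCLike.conj_ofReal, norm_mul, mul_pow, RCLike.norm_ofReal, sq_abs]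

lemma sq_norm_mul_sq_norm_apply_le_of_eigenbasis (hf : f.IsSymmetric)
    (hb : ∀ i, f (b i) = (μ i : 𝕜) • b i) {a c : ℝ} (hac : a ≤ c) {e : V}
    (hc : ∀ i, μ i ^ 2 ≤ c) (ha : ∀ i, inner 𝕜 (b i) e ≠ 0 → μ i ^ 2 ≤ a) (x : V) :
    ‖e‖ ^ 2 * ‖f x‖ ^ 2 ≤ c * ‖e‖ ^ 2 * ‖x‖ ^ 2 - (c - a) * ‖inner 𝕜 e x‖ ^ 2 := by
  classical
  let M : Finset ι := {i | inner 𝕜 (b i) e ≠ 0}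
  have inner_le : ‖inner 𝕜 e x‖ ^ 2 ≤ ‖e‖ ^ 2 * ∑ i ∈ M, ‖inner 𝕜 (b i) x‖ ^ 2 :=
    sq_norm_inner_le_mul_sum_of_inner_eq_zero b (fun i hi => by simpa [M] using hi) x
  have apply_le : ‖f x‖ ^ 2 ≤ c * ‖x‖ ^ 2 - (c - a) * ∑ i ∈ M, ‖inner 𝕜 (b i) x‖ ^ 2 := by
    rw [sq_norm_apply_eq_sum_of_eigenbasis b hf hb, ← b.sum_sq_norm_inner_right x,
      Finset.sum_filter, Finset.mul_sum, Finset.mul_sum, ← Finset.sum_sub_distrib]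
    refine Finset.sum_le_sum fun i _ => ?_
    split_ifs with hi
    · linarith [mul_le_mul_of_nonneg_right (ha i hi) (sq_nonneg ‖inner 𝕜 (b i) x‖)]
    · linarith [mul_le_mul_of_nonneg_right (hc i) (sq_nonneg ‖inner 𝕜 (b i) x‖)]
  linarith [mul_le_mul_of_nonneg_left apply_le (sq_nonneg ‖e‖),
    mul_le_mul_of_nonneg_left inner_le (sub_nonneg.2 hac)]

end OrthonormalBasis

section MainEigenvalue

variable {𝕜 n : Type*} [RCLike 𝕜] [Fintype n] {S : Matrix n n 𝕜} {e : n → 𝕜} {θ : ℝ}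

/-- `θ` is a main eigenvalue of `S` relative to the vector `e` (the all-one vector for the main
eigenvalues of a digraph): some `θ`-eigenvector is not orthogonal to `e`. -/
def IsMainEigenvalue (S : Matrix n n 𝕜) (e : n → 𝕜) (θ : ℝ) : Prop :=
  ∃ w : n → 𝕜, S *ᵥ w = (θ : 𝕜) • w ∧ star w ⬝ᵥ e ≠ 0

lemma mulVec_star_eq_neg_smul (hS : S.IsHermitian) (hskew : Sᵀ = -S) {w : n → 𝕜}
    (hw : S *ᵥ w = (θ : 𝕜) • w) : S *ᵥ star w = ((-θ : ℝ) : 𝕜) • star w := by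
  have star_eq : star (S *ᵥ w) = -(S *ᵥ star w) := by
    rw [star_mulVec, hS.eq, ← mulVec_transpose, hskew, neg_mulVec]
  rw [← neg_eq_iff_eq_neg.2 star_eq, hw]
  simp [star_smul]

lemma IsMainEigenvalue.neg (hS : S.IsHermitian) (hskew : Sᵀ = -S) (he : star e = e)
    (h : IsMainEigenvalue S e θ) : IsMainEigenvalue S e (-θ) := by
  obtain ⟨w, hw, hwe⟩ := h
  refine ⟨star w, mulVec_star_eq_neg_smul hS hskew hw, ?_⟩
  rwa [← he, star_dotProduct_star, star_ne_zero, dotProduct_comm]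

variable [DecidableEq n]

lemma neg_mem_image_eigenvalues (hS : S.IsHermitian) (hskew : Sᵀ = -S)
    (hθ : θ ∈ univ.image hS.eigenvalues) : -θ ∈ univ.image hS.eigenvalues := by
  have mem_iff (η : ℝ) : η ∈ univ.image hS.eigenvalues ↔ η ∈ spectrum ℝ S := by
    simp [hS.spectrum_real_eq_range_eigenvalues]
  rw [mem_iff, spectrum.mem_iff] at hθ ⊢
  have transpose_eq : (algebraMap ℝ (Matrix n n 𝕜) (-θ) - S)ᵀ = -(algebraMap ℝ _ θ - S) := by
    rw [transpose_sub, hskew, Algebra.algebraMap_eq_smul_one, Algebra.algebraMap_eq_smul_one,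
      transpose_smul, transpose_one]
    module
  rwa [← isUnit_transpose, transpose_eq, IsUnit.neg_iff]

lemma sq_norm_mul_sq_norm_mulVec_le (hS : S.IsHermitian) {a c : ℝ} (hac : a ≤ c)
    (hc : ∀ i, hS.eigenvalues i ^ 2 ≤ c)
    (ha : ∀ i, IsMainEigenvalue S e (hS.eigenvalues i) → hS.eigenvalues i ^ 2 ≤ a) (x : n → 𝕜) :
    (∑ j, ‖e j‖ ^ 2) * ∑ j, ‖(S *ᵥ x) j‖ ^ 2 ≤
      c * (∑ j, ‖e j‖ ^ 2) * (∑ j, ‖x j‖ ^ 2) - (c - a) * ‖star e ⬝ᵥ x‖ ^ 2 := by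
  have mulVec_basis (i : n) : S *ᵥ ⇑(hS.eigenvectorBasis i) =
      (hS.eigenvalues i : 𝕜) • ⇑(hS.eigenvectorBasis i) := by
    rw [hS.mulVec_eigenvectorBasis, RCLike.real_smul_eq_coe_smul (K := 𝕜)]
  have bound := sq_norm_mul_sq_norm_apply_le_of_eigenbasis hS.eigenvectorBasis
    (f := toEuclideanLin S) (isSymmetric_toEuclideanLin_iff.2 hS)
    (fun i => congrArg (WithLp.toLp 2) (mulVec_basis i)) hac (e := WithLp.toLp 2 e) hc
    (fun i hi => ha i ⟨_, mulVec_basis i, ?_⟩) (WithLp.toLp 2 x)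
  · simpa [EuclideanSpace.norm_sq_eq, EuclideanSpace.inner_eq_star_dotProduct,
      dotProduct_comm] using bound
  · simpa [EuclideanSpace.inner_eq_star_dotProduct, dotProduct_comm] using hi

end MainEigenvalue

lemma IsEigenProjection.mulVec_ne_zero_iff {v : ℕ} {S P : Matrix (Fin v) (Fin v) ℂ} {θ : ℝ}
    (hP : IsEigenProjection S θ P) (e : Fin v → ℂ) :
    P *ᵥ e ≠ 0 ↔ IsMainEigenvalue S e θ := by
  obtain ⟨hermitian, idempotent, fixed_iff⟩ := hP
  have star_mulVec_dotProduct (w : Fin v → ℂ) : star (P *ᵥ w) ⬝ᵥ e = star w ⬝ᵥ (P *ᵥ e) := by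
    rw [star_mulVec, hermitian.eq, ← dotProduct_mulVec]
  constructor
  · intro hPe
    have fixed : P *ᵥ (P *ᵥ e) = P *ᵥ e := by rw [mulVec_mulVec, idempotent]
    refine ⟨P *ᵥ e, (fixed_iff _).2 fixed, ?_⟩
    rw [← fixed, star_mulVec_dotProduct]
    open scoped ComplexOrder in exact mt dotProduct_star_self_eq_zero.1 hPe
  · rintro ⟨w, hw, hwe⟩ hPe
    rw [← (fixed_iff w).1 hw, star_mulVec_dotProduct, hPe, dotProduct_zero] at hwe
    exact hwe rfl

section TransitiveRelation

variable {ι : Type*} {r : ι → ι → Prop} [DecidableRel r] {T : Finset ι}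

lemma card_filter_rel_lt_of_rel (hirrefl : ∀ x ∈ T, ¬ r x x)
    (htrans : ∀ x ∈ T, ∀ y ∈ T, ∀ z ∈ T, r x y → r y z → r x z)
    {x y : ι} (hx : x ∈ T) (hy : y ∈ T) (hxy : r x y) :
    #{z ∈ T | r y z} < #{z ∈ T | r x z} := by
  refine card_lt_card ((ssubset_iff_of_subset fun z hz => ?_).2 ⟨y, ?_, ?_⟩)
  · rw [mem_filter] at hz ⊢
    exact ⟨hz.1, htrans x hx y hy z hz.1 hxy hz.2⟩
  · exact mem_filter.2 ⟨hy, hxy⟩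
  · exact fun h => hirrefl y hy (mem_filter.1 h).2

lemma injOn_card_filter_rel (hirrefl : ∀ x ∈ T, ¬ r x x)
    (htotal : ∀ x ∈ T, ∀ y ∈ T, x ≠ y → r x y ∨ r y x)
    (htrans : ∀ x ∈ T, ∀ y ∈ T, ∀ z ∈ T, r x y → r y z → r x z) :
    Set.InjOn (fun x => #{y ∈ T | r x y}) T := by
  intro x hx y hy card_eq
  by_contra hne
  rcases htotal x hx y hy hne with hxy | hyx
  · exact (card_filter_rel_lt_of_rel hirrefl htrans hx hy hxy).ne' card_eq
  · exact (card_filter_rel_lt_of_rel hirrefl htrans hy hx hyx).ne card_eq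

lemma image_card_filter_rel_eq_range (hirrefl : ∀ x ∈ T, ¬ r x x)
    (htotal : ∀ x ∈ T, ∀ y ∈ T, x ≠ y → r x y ∨ r y x)
    (htrans : ∀ x ∈ T, ∀ y ∈ T, ∀ z ∈ T, r x y → r y z → r x z) :
    T.image (fun x => #{y ∈ T | r x y}) = range #T := by
  refine eq_of_subset_of_card_le (image_subset_iff.2 fun x hx => ?_) ?_
  · exact mem_range.2 (card_lt_card (filter_ssubset.2 ⟨x, hx, hirrefl x hx⟩))
  · rw [card_range, card_image_of_injOn (injOn_card_filter_rel hirrefl htotal htrans)]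

end TransitiveRelation

lemma sum_range_sq_two_mul_sub (s : ℕ) :
    ∑ j ∈ range s, (2 * (j : ℝ) - (s - 1)) ^ 2 = s * ((s : ℝ) ^ 2 - 1) / 3 := by
  have sum_sq_sub (t : ℝ) (m : ℕ) : ∑ j ∈ range m, (2 * (j : ℝ) - t) ^ 2 =
      2 * m * (m - 1) * (2 * m - 1) / 3 - 2 * t * m * (m - 1) + m * t ^ 2 := by
    induction m with
    | zero => simp
    | succ m ih => rw [sum_range_succ, ih]; push_cast; ring
  rw [sum_sq_sub]
  ring

section Digraph

variable {v : ℕ} {A : Matrix (Fin v) (Fin v) ℂ} {T : Finset (Fin v)}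

lemma transpose_seidel (A : Matrix (Fin v) (Fin v) ℂ) : (Seidel A)ᵀ = -Seidel A := by
  simp [Seidel, transpose_smul, transpose_sub, ← smul_neg]

lemma seidel_mulVec_indicator (hA : IsDigraph A) (hT : IsTransSubtournament A T) {x : Fin v}
    (hx : x ∈ T) :
    (Seidel A *ᵥ (T : Set (Fin v)).indicator 1) x =
      Complex.I * ((2 * (#{y ∈ T | A x y = 1} : ℝ) - (#T - 1) : ℝ) : ℂ) := by
  have entry (y : Fin v) (hy : y ∈ T) : A x y - A y x =
      2 * (if A x y = 1 then 1 else 0) - 1 + if x = y then 1 else 0 := by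
    by_cases hxy : x = y
    · subst hxy
      simp [hA.2]
    · rcases hT.1 x hx y hy hxy with ⟨arc, not_arc⟩ | ⟨arc, not_arc⟩
      · rw [arc, (hA.1 y x).resolve_right not_arc, if_pos rfl, if_neg hxy]
        norm_num
      · rw [arc, (hA.1 x y).resolve_right not_arc, if_neg zero_ne_one, if_neg hxy]
        norm_num
  calc (Seidel A *ᵥ (T : Set (Fin v)).indicator 1) x
      = Complex.I * ∑ y ∈ T, (A x y - A y x) := by
        rw [mul_sum]
        simp [mulVec, dotProduct, Seidel, Set.indicator_apply]
    _ = Complex.I * ((2 * (#{y ∈ T | A x y = 1} : ℝ) - (#T - 1) : ℝ) : ℂ) := by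
        rw [sum_congr rfl entry, sum_add_distrib, sum_sub_distrib, ← mul_sum, sum_boole, sum_const,
          sum_ite_eq, if_pos hx, nsmul_one]
        push_cast
        ring

lemma le_sum_sq_norm_seidel_mulVec_indicator (hA : IsDigraph A) (hT : IsTransSubtournament A T) :
    #T * ((#T : ℝ) ^ 2 - 1) / 3 ≤
      ∑ x, ‖(Seidel A *ᵥ (T : Set (Fin v)).indicator 1) x‖ ^ 2 := by
  let : DecidableRel fun x y => A x y = 1 := fun _ _ => inferInstance
  have irrefl (x) (_ : x ∈ T) : ¬ A x x = 1 := by simp [hA.2]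
  have total (x) (hx : x ∈ T) (y) (hy : y ∈ T) (hxy : x ≠ y) : A x y = 1 ∨ A y x = 1 :=
    (hT.1 x hx y hy hxy).imp And.left And.left
  calc #T * ((#T : ℝ) ^ 2 - 1) / 3
      = ∑ x ∈ T, (2 * (#{y ∈ T | A x y = 1} : ℝ) - (#T - 1)) ^ 2 := by
        rw [← sum_range_sq_two_mul_sub, ← image_card_filter_rel_eq_range irrefl total hT.2,
          sum_image (injOn_card_filter_rel irrefl total hT.2)]
    _ = ∑ x ∈ T, ‖(Seidel A *ᵥ (T : Set (Fin v)).indicator 1) x‖ ^ 2 := by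
        refine sum_congr rfl fun x hx => ?_
        rw [seidel_mulVec_indicator hA hT hx, norm_mul, Complex.norm_I, one_mul, Complex.norm_real,
          Real.norm_eq_abs, sq_abs]
    _ ≤ ∑ x, ‖(Seidel A *ᵥ (T : Set (Fin v)).indicator 1) x‖ ^ 2 :=
        sum_le_sum_of_subset_of_nonneg T.subset_univ fun _ _ _ => sq_nonneg _

lemma cubic_card_transSubtournament_le (hA : IsDigraph A) (hS : (Seidel A).IsHermitian)
    (hT : IsTransSubtournament A T) {a c : ℝ} (hac : a ≤ c)
    (hc : ∀ i, hS.eigenvalues i ^ 2 ≤ c)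
    (ha : ∀ i, IsMainEigenvalue (Seidel A) 1 (hS.eigenvalues i) → hS.eigenvalues i ^ 2 ≤ a) :
    v * (#T * ((#T : ℝ) ^ 2 - 1) / 3) ≤ c * v * #T - (c - a) * (#T : ℝ) ^ 2 := by
  have sq_norm_indicator : ∑ x, ‖(T : Set (Fin v)).indicator (1 : Fin v → ℂ) x‖ ^ 2 = #T := by
    simp [Set.indicator_apply, apply_ite]
  have one_dotProduct_indicator :
      star (1 : Fin v → ℂ) ⬝ᵥ (T : Set (Fin v)).indicator 1 = #T := by
    simp [dotProduct, Set.indicator_apply]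
  have upper := sq_norm_mul_sq_norm_mulVec_le hS hac hc ha ((T : Set (Fin v)).indicator 1)
  rw [sq_norm_indicator, one_dotProduct_indicator, Complex.norm_natCast] at upper
  simp only [Pi.one_apply, norm_one, one_pow, sum_const, card_univ, Fintype.card_fin,
    nsmul_one] at upper
  exact (mul_le_mul_of_nonneg_left (le_sum_sq_norm_seidel_mulVec_indicator hA hT)
    v.cast_nonneg).trans upper

end Digraph

lemma le_div_two_mul_of_cubic_le {s v a c : ℝ} (hv : 0 < v) (hs : 0 ≤ s) (hc : 0 ≤ c)
    (h : v * (s * (s ^ 2 - 1) / 3) ≤ c * v * s - (c - a) * s ^ 2) :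
    s ≤ (3 * a - 3 * c + √(4 * v ^ 2 * (1 + 3 * c) + 9 * (c - a) ^ 2)) / (2 * v) := by
  suffices 2 * v * s + 3 * (c - a) ≤ √(4 * v ^ 2 * (1 + 3 * c) + 9 * (c - a) ^ 2) by
    rw [le_div_iff₀ (by positivity)]
    linarith
  apply Real.le_sqrt_of_sq_le
  rcases hs.eq_or_lt with rfl | hs
  · have : 0 ≤ 4 * v ^ 2 * (1 + 3 * c) := by positivity
    linarith
  · have quadratic : v * s ^ 2 + 3 * (c - a) * s ≤ v * (1 + 3 * c) :=
      le_of_mul_le_mul_left (by linarith) hs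
    linarith [mul_le_mul_of_nonneg_left quadratic (by positivity : 0 ≤ 4 * v)]

/-- Hoffman-type bound for digraphs: if a digraph with `v` vertices contains a transitive
subtournament of size `s`, `α` is the largest main eigenvalue of its Seidel matrix, `γ` is
the largest non-main eigenvalue, and `α ≤ γ`, then
`s ≤ (3α² − 3γ² + √(4v²(1+3γ²) + 9(γ²−α²)²))/(2v)`. -/
theorem hoffman_type_bound_digraph
    {v s : ℕ} (A : Matrix (Fin v) (Fin v) ℂ) (hA : IsDigraph A)
    (hH : (Seidel A).IsHermitian)
    (E : ℝ → Matrix (Fin v) (Fin v) ℂ)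
    (hE : ∀ θ ∈ Finset.univ.image hH.eigenvalues, IsEigenProjection (Seidel A) θ (E θ))
    (T : Finset (Fin v)) (hT : IsTransSubtournament A T) (hTcard : T.card = s)
    (α γ : ℝ)
    (hα₁ : α ∈ Finset.univ.image hH.eigenvalues ∧ E α *ᵥ (fun _ => 1) ≠ 0)
    (hα₂ : ∀ θ ∈ Finset.univ.image hH.eigenvalues, E θ *ᵥ (fun _ => 1) ≠ 0 → θ ≤ α)
    (hγ₁ : γ ∈ Finset.univ.image hH.eigenvalues ∧ E γ *ᵥ (fun _ => 1) = 0)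
    (hγ₂ : ∀ θ ∈ Finset.univ.image hH.eigenvalues, E θ *ᵥ (fun _ => 1) = 0 → θ ≤ γ)
    (hαγ : α ≤ γ) :
    (s : ℝ) ≤ (3 * α ^ 2 - 3 * γ ^ 2 +
      Real.sqrt (4 * (v : ℝ) ^ 2 * (1 + 3 * γ ^ 2) + 9 * (γ ^ 2 - α ^ 2) ^ 2)) /
        (2 * (v : ℝ)) := by
  have neg_mem : ∀ θ ∈ univ.image hH.eigenvalues, -θ ∈ univ.image hH.eigenvalues := fun _ =>
    neg_mem_image_eigenvalues hH (transpose_seidel A)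
  have main_iff : ∀ θ ∈ univ.image hH.eigenvalues,
      (E θ *ᵥ (fun _ => 1) ≠ 0 ↔ IsMainEigenvalue (Seidel A) 1 θ) := fun θ hθ =>
    (hE θ hθ).mulVec_ne_zero_iff 1
  have main_le : ∀ θ ∈ univ.image hH.eigenvalues, IsMainEigenvalue (Seidel A) 1 θ → θ ≤ α :=
    fun θ hθ hmain => hα₂ θ hθ ((main_iff θ hθ).2 hmain)
  have le_gamma : ∀ θ ∈ univ.image hH.eigenvalues, θ ≤ γ := fun θ hθ =>
    (em _).elim (hγ₂ θ hθ) fun hmain => (hα₂ θ hθ hmain).trans hαγ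
  have sq_main_le : ∀ θ ∈ univ.image hH.eigenvalues,
      IsMainEigenvalue (Seidel A) 1 θ → θ ^ 2 ≤ α ^ 2 := fun θ hθ hmain =>
    have hneg := hmain.neg hH (transpose_seidel A) (star_one _)
    sq_le_sq' (neg_le.1 (main_le _ (neg_mem θ hθ) hneg)) (main_le θ hθ hmain)
  have sq_le : ∀ θ ∈ univ.image hH.eigenvalues, θ ^ 2 ≤ γ ^ 2 := fun θ hθ =>
    sq_le_sq' (neg_le.1 (le_gamma _ (neg_mem θ hθ))) (le_gamma θ hθ)
  have eigenvalues_mem (i) := mem_image_of_mem hH.eigenvalues (mem_univ i)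
  have v_pos : 0 < v := let ⟨i, _⟩ := mem_image.1 hα₁.1; i.pos
  rw [← hTcard]
  refine le_div_two_mul_of_cubic_le (Nat.cast_pos.2 v_pos) (Nat.cast_nonneg _) (sq_nonneg γ) ?_
  exact cubic_card_transSubtournament_le hA hH hT (sq_le α hα₁.1)
    (fun i => sq_le _ (eigenvalues_mem i)) fun i => sq_main_le _ (eigenvalues_mem i)
end

section
/- Let G be a doubly regular tournament on v = 4m−1 vertices (m ≥ 1), let Γ be a transitive subtournament of size s in G, and for 0 ≤ i ≤ s let n_i be the number of vertices q ∈ V(G)∖V(Γ) such that exactly i vertices of Γ dominate q. Then: (j=0) ∑_{i=0}^{s} n_i = v − s; (j=1) ∑_{i=0}^{s} i·n_i = s·((2m−1) − (s−1)/2); and (j=2) ∑_{i=0}^{s} C(i,2)·n_i = C(s,2)·((m−1) − (s−2)/3). -/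
open Matrix Finset

/-- A tournament: a digraph with `A + Aᵀ = J - I`. -/
def IsTournament {v : ℕ} (A : Matrix (Fin v) (Fin v) ℂ) : Prop :=
  IsDigraph A ∧ A + Aᵀ = Matrix.of (fun _ _ => 1) - 1

/-- A doubly regular tournament: every vertex dominates exactly `(v-1)/2` vertices and every
pair of distinct vertices jointly dominates exactly `(v-3)/4` vertices (so `v ≡ 3 (mod 4)`). -/
def IsDRT {v : ℕ} (A : Matrix (Fin v) (Fin v) ℂ) : Prop :=
  IsTournament A ∧ v % 4 = 3 ∧
  (∀ x, (univ.filter fun y => A x y = 1).card = (v - 1) / 2) ∧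
  (∀ x y, x ≠ y → (univ.filter fun z => A x z = 1 ∧ A y z = 1).card = (v - 3) / 4)

/-!
Count in two ways the pairs `(S, q)` where `S ⊆ Γ` has size `j` and every vertex of `S` dominates
`q`. Summing over `S`, double regularity gives `C(s, j) * λ_j` with `λ_0 = v`,
`λ_1 = 2m - 1` and `λ_2 = m - 1`. Summing over `q`, the vertices outside `Γ` contribute
`∑ C(i, j) * n_i`, while in the transitive order of `Γ` its vertices are dominated by
`0, 1, …, s - 1` members of `Γ` and so contribute `∑_{i < s} C(i, j) = C(s, j + 1)`.
-/

section Binomial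

theorem sum_range_choose_right (n k : ℕ) : ∑ i ∈ range n, i.choose k = n.choose (k + 1) := by
  induction n with
  | zero => simp
  | succ n ih => rw [sum_range_succ, ih, Nat.choose_succ_succ', add_comm]

theorem cast_choose_succ_right (K : Type*) [Field K] [CharZero K] (n k : ℕ) :
    (n.choose (k + 1) : K) = n.choose k * ((n - k) / (k + 1)) := by
  rw [← mul_div_assoc, eq_div_iff (Nat.cast_add_one_ne_zero k)]
  rcases le_or_gt k n with hkn | hnk
  · rw [← Nat.cast_sub hkn]
    exact_mod_cast Nat.choose_succ_right_eq n k
  · simp [Nat.choose_eq_zero_of_lt hnk, Nat.choose_eq_zero_of_lt (Nat.lt_succ_of_lt hnk)]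

end Binomial

section Digraph

variable {V : Type*}

/-- `r` restricts to a strict total order on `T`: in the digraph with arc relation `r`, the vertices
in `T` span a transitive tournament. -/
structure IsTransTournamentOn (r : V → V → Prop) (T : Finset V) : Prop where
  irrefl : ∀ x ∈ T, ¬ r x x
  trans : ∀ x ∈ T, ∀ y ∈ T, ∀ z ∈ T, r x y → r y z → r x z
  isChain : IsChain r (T : Set V)

variable (r : V → V → Prop) [DecidableRel r]

/-- The number of vertices in `T` that dominate `q`. -/
def dominatorCount (T : Finset V) (q : V) : ℕ :=
  #{a ∈ T | r a q}

/-- The set of vertices dominated by every vertex in `S`. -/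
def jointlyDominated [Fintype V] (S : Finset V) : Finset V :=
  {q | ∀ a ∈ S, r a q}

/-- The intersection number `n_i` of `T`: the number of vertices outside `T` that are dominated by
exactly `i` vertices in `T`. -/
def intersectionNumber [Fintype V] [DecidableEq V] (T : Finset V) (i : ℕ) : ℕ :=
  #{q ∈ univ \ T | dominatorCount r T q = i}

theorem sum_choose_dominatorCount [Fintype V] (T : Finset V) (j : ℕ) :
    ∑ q, (dominatorCount r T q).choose j = ∑ S ∈ T.powersetCard j, #(jointlyDominated r S) := by
  have powersetCard_dominators (q : V) :
      powersetCard j {a ∈ T | r a q} = {S ∈ T.powersetCard j | ∀ a ∈ S, r a q} := by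
    ext S
    simp only [mem_powersetCard, mem_filter, subset_iff, forall_and]
    tauto
  simp_rw [dominatorCount, ← card_powersetCard, powersetCard_dominators]
  exact (sum_card_bipartiteAbove_eq_sum_card_bipartiteBelow fun S q => ∀ a ∈ S, r a q).symm

theorem sum_intersectionNumber_nsmul [Fintype V] [DecidableEq V] {M : Type*} [AddCommMonoid M]
    (T : Finset V) (f : ℕ → M) :
    ∑ i ∈ range (#T + 1), intersectionNumber r T i • f i =
      ∑ q ∈ univ \ T, f (dominatorCount r T q) := by
  have dominatorCount_mem_range (q : V) (_ : q ∈ univ \ T) :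
      dominatorCount r T q ∈ range (#T + 1) :=
    mem_range_succ_iff.2 (card_filter_le _ _)
  simp only [← sum_fiberwise_of_maps_to' dominatorCount_mem_range, sum_const, intersectionNumber]

end Digraph

namespace IsTransTournamentOn

variable {V : Type*} {r : V → V → Prop} [DecidableRel r] {T : Finset V}

theorem dominatorCount_lt_card (hT : IsTransTournamentOn r T) {q : V} (hq : q ∈ T) :
    dominatorCount r T q < #T :=
  card_lt_card (filter_ssubset.2 ⟨q, hq, hT.irrefl q hq⟩)

theorem dominatorCount_lt_dominatorCount (hT : IsTransTournamentOn r T) {x y : V} (hx : x ∈ T)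
    (hy : y ∈ T) (hxy : r x y) : dominatorCount r T x < dominatorCount r T y := by
  refine card_lt_card ((ssubset_iff_of_subset ?_).2 ⟨x, ?_, ?_⟩)
  · intro a ha
    obtain ⟨haT, hax⟩ := mem_filter.1 ha
    exact mem_filter.2 ⟨haT, hT.trans a haT x hx y hy hax hxy⟩
  · exact mem_filter.2 ⟨hx, hxy⟩
  · exact fun hxx => hT.irrefl x hx (mem_filter.1 hxx).2

theorem injOn_dominatorCount (hT : IsTransTournamentOn r T) :
    Set.InjOn (dominatorCount r T) T := by
  intro x hx y hy hxy
  by_contra hne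
  rcases hT.isChain hx hy hne with h | h
  · exact (hT.dominatorCount_lt_dominatorCount hx hy h).ne hxy
  · exact (hT.dominatorCount_lt_dominatorCount hy hx h).ne' hxy

theorem image_dominatorCount (hT : IsTransTournamentOn r T) :
    T.image (dominatorCount r T) = range #T := by
  refine eq_of_subset_of_card_le (image_subset_iff.2 fun q hq => ?_) ?_
  · exact mem_range.2 (hT.dominatorCount_lt_card hq)
  · rw [card_image_of_injOn hT.injOn_dominatorCount, card_range]

theorem sum_comp_dominatorCount {M : Type*} [AddCommMonoid M] (hT : IsTransTournamentOn r T)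
    (f : ℕ → M) : ∑ q ∈ T, f (dominatorCount r T q) = ∑ i ∈ range #T, f i := by
  rw [← hT.image_dominatorCount, sum_image hT.injOn_dominatorCount]

theorem sum_choose_mul_intersectionNumber_add_choose [Fintype V] [DecidableEq V]
    (hT : IsTransTournamentOn r T) (j : ℕ) :
    ∑ i ∈ range (#T + 1), i.choose j * intersectionNumber r T i + (#T).choose (j + 1) =
      ∑ S ∈ T.powersetCard j, #(jointlyDominated r S) := by
  calc
    _ = ∑ q ∈ univ \ T, (dominatorCount r T q).choose j
          + ∑ q ∈ T, (dominatorCount r T q).choose j := by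
      rw [← sum_intersectionNumber_nsmul r T fun i => i.choose j,
        hT.sum_comp_dominatorCount fun i => i.choose j, sum_range_choose_right]
      simp only [smul_eq_mul, mul_comm]
    _ = ∑ q, (dominatorCount r T q).choose j := sum_sdiff (subset_univ T)
    _ = _ := sum_choose_dominatorCount r T j

end IsTransTournamentOn

theorem intersection_numbers_doubly_regular_tournament_general {V K : Type*} [Fintype V]
    [DecidableEq V] [Field K] [CharZero K] {r : V → V → Prop} [DecidableRel r] {T : Finset V}
    (hT : IsTransTournamentOn r T) (j : ℕ) (lam : K)
    (hlam : ∀ S ⊆ T, #S = j → (#(jointlyDominated r S) : K) = lam) :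
    ∑ i ∈ range (#T + 1), (i.choose j : K) * intersectionNumber r T i =
      (#T).choose j * (lam - (#T - j) / (j + 1)) := by
  have sum_jointlyDominated :
      ∑ S ∈ T.powersetCard j, (#(jointlyDominated r S) : K) = (#T).choose j * lam := by
    rw [sum_congr rfl fun S hS => hlam S (mem_powersetCard.1 hS).1 (mem_powersetCard.1 hS).2,
      sum_const, card_powersetCard, nsmul_eq_mul]
  rw [mul_sub, ← cast_choose_succ_right, ← sum_jointlyDominated, eq_sub_iff_add_eq]
  exact_mod_cast hT.sum_choose_mul_intersectionNumber_add_choose j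

section DoublyRegularTournament

variable {v : ℕ} {A : Matrix (Fin v) (Fin v) ℂ}

/-- The arc relation of the digraph with adjacency matrix `A`. -/
def Dominates (A : Matrix (Fin v) (Fin v) ℂ) (x y : Fin v) : Prop :=
  A x y = 1

noncomputable instance : DecidableRel (Dominates A) :=
  fun x y => inferInstanceAs (Decidable (A x y = 1))

theorem IsTransSubtournament.isTransTournamentOn {T : Finset (Fin v)}
    (hT : IsTransSubtournament A T) (hA : IsDigraph A) :
    IsTransTournamentOn (Dominates A) T where
  irrefl x _ := by simp [Dominates, hA.2 x]
  trans := hT.2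
  isChain x hx y hy hne := Xor.or (hT.1 x hx y hy hne)

theorem IsDRT.card_jointlyDominated_of_card_eq_one (hA : IsDRT A) {S : Finset (Fin v)}
    (hS : #S = 1) : (#(jointlyDominated (Dominates A) S) : ℝ) = (v - 1) / 2 := by
  obtain ⟨-, hv, card_out, -⟩ := hA
  obtain ⟨x, rfl⟩ := card_eq_one.1 hS
  have two_mul_card : 2 * #(jointlyDominated (Dominates A) {x}) + 1 = v := by
    simp only [jointlyDominated, Dominates, mem_singleton, forall_eq, card_out]
    omega
  rify at two_mul_card
  linarith

theorem IsDRT.card_jointlyDominated_of_card_eq_two (hA : IsDRT A) {S : Finset (Fin v)}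
    (hS : #S = 2) : (#(jointlyDominated (Dominates A) S) : ℝ) = (v - 3) / 4 := by
  obtain ⟨-, hv, -, card_common_out⟩ := hA
  obtain ⟨x, y, hxy, rfl⟩ := card_eq_two.1 hS
  have four_mul_card : 4 * #(jointlyDominated (Dominates A) {x, y}) + 3 = v := by
    simp only [jointlyDominated, Dominates, mem_insert, mem_singleton, forall_eq_or_imp, forall_eq,
      card_common_out x y hxy]
    omega
  rify at four_mul_card
  linarith

end DoublyRegularTournament

/-- In a doubly regular tournament on `v = 4m-1` vertices with a transitive subtournament
`Γ` of size `s`, letting `n i` be the number of vertices outside `Γ` dominated by exactly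
`i` vertices of `Γ`, one has `∑ n_i = v - s`, `∑ i n_i = s((2m-1) - (s-1)/2)` and
`∑ C(i,2) n_i = C(s,2)((m-1) - (s-2)/3)`. -/
theorem intersection_numbers_doubly_regular_tournament
    {m s : ℕ} (hm : 1 ≤ m)
    (A : Matrix (Fin (4 * m - 1)) (Fin (4 * m - 1)) ℂ) (hA : IsDRT A)
    (T : Finset (Fin (4 * m - 1))) (hT : IsTransSubtournament A T) (hTcard : T.card = s)
    (n : ℕ → ℕ)
    (hn : ∀ i, n i =
      ((univ \ T).filter fun q => (T.filter fun a => A a q = 1).card = i).card) :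
    (∑ i ∈ Finset.range (s + 1), (n i : ℝ)) = (4 * (m : ℝ) - 1) - (s : ℝ) ∧
    (∑ i ∈ Finset.range (s + 1), (i : ℝ) * (n i : ℝ)) =
      (s : ℝ) * ((2 * (m : ℝ) - 1) - ((s : ℝ) - 1) / 2) ∧
    (∑ i ∈ Finset.range (s + 1), (Nat.choose i 2 : ℝ) * (n i : ℝ)) =
      (Nat.choose s 2 : ℝ) * (((m : ℝ) - 1) - ((s : ℝ) - 2) / 3) := by
  obtain rfl : n = intersectionNumber (Dominates A) T := funext hn
  subst hTcard
  have hv : ((4 * m - 1 : ℕ) : ℝ) = 4 * m - 1 := by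
    rw [Nat.cast_pred (by omega), Nat.cast_mul, Nat.cast_ofNat]
  have identity := intersection_numbers_doubly_regular_tournament_general (K := ℝ)
    (hT.isTransTournamentOn hA.1.1)
  refine ⟨?_, ?_, ?_⟩
  · simpa using identity 0 (4 * m - 1) fun S _ hS => by
      simp [card_eq_zero.1 hS, jointlyDominated, hv]
  · simpa [one_add_one_eq_two] using identity 1 (2 * m - 1) fun S _ hS => by
      rw [hA.card_jointlyDominated_of_card_eq_one hS, hv]
      ring
  · simpa [two_add_one_eq_three] using identity 2 (m - 1) fun S _ hS => by
      rw [hA.card_jointlyDominated_of_card_eq_two hS, hv]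
      ring
end
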